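/- arXiv:2504.12776 — 3 statements merged into one kernel-verified Lean document; each statement's English description precedes it below -/
import Mathlib

section
/- For every layout Λ compatible with the bin assignment b, the total crossing number of Λ is at least Σ_{1 ≤ i < j ≤ m} alt(i,j). -/
open Finset

/-- `Compatible b L` : the layout `L` respects the bin assignment `b`. -/
def Compatible {m n : ℕ} (b : Fin m → Fin n → ℕ) (L : Fin n → Equiv.Perm (Fin m)) : Prop :=
  ∀ i j : Fin m, ∀ k : Fin n, b i k < b j k → L k i < L k j

/-- Curves `i` and `j` cross between elements `k` and `k+1`. -/
def CrossAt {m n : ℕ} (L : Fin n → Equiv.Perm (Fin m)) (i j : Fin m) (k : Fin n) : Prop :=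
  ∃ h : (k : ℕ) + 1 < n,
    (L k i < L k j ∧ L ⟨(k : ℕ) + 1, h⟩ j < L ⟨(k : ℕ) + 1, h⟩ i) ∨
    (L k j < L k i ∧ L ⟨(k : ℕ) + 1, h⟩ i < L ⟨(k : ℕ) + 1, h⟩ j)

instance {m n : ℕ} (L : Fin n → Equiv.Perm (Fin m)) (i j : Fin m) :
    DecidablePred (CrossAt L i j) := fun k => by unfold CrossAt; infer_instance

/-- Number of crossings of curves `i` and `j` in layout `L`. -/
def crossCount {m n : ℕ} (L : Fin n → Equiv.Perm (Fin m)) (i j : Fin m) : ℕ :=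
  (univ.filter (CrossAt L i j)).card

/-- Alternation pairs of curves `i` and `j` under bin assignment `b`. -/
def AltPair {m n : ℕ} (b : Fin m → Fin n → ℕ) (i j : Fin m) (p : Fin n × Fin n) : Prop :=
  p.1 < p.2 ∧ (∀ t : Fin n, p.1 < t → t < p.2 → b i t = b j t) ∧
    ((b i p.1 < b j p.1 ∧ b j p.2 < b i p.2) ∨ (b j p.1 < b i p.1 ∧ b i p.2 < b j p.2))

instance {m n : ℕ} (b : Fin m → Fin n → ℕ) (i j : Fin m) :
    DecidablePred (AltPair b i j) := fun p => by unfold AltPair; infer_instance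

/-- Alternation number of curves `i` and `j`. -/
def altCount {m n : ℕ} (b : Fin m → Fin n → ℕ) (i j : Fin m) : ℕ :=
  (univ.filter (AltPair b i j)).card

/-- Total crossing number of layout `L` (sum over unordered pairs of curves). -/
def totalCross {m n : ℕ} (L : Fin n → Equiv.Perm (Fin m)) : ℕ :=
  ∑ p ∈ univ.filter (fun p : Fin m × Fin m => p.1 < p.2), crossCount L p.1 p.2

/-- Total wiggle of layout `L`. -/
def totalWiggle {m n : ℕ} (L : Fin n → Equiv.Perm (Fin m)) : ℤ :=
  ∑ k : Fin n, ∑ i : Fin m,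
    if h : (k : ℕ) + 1 < n then
      |((L ⟨(k : ℕ) + 1, h⟩ i : ℕ) : ℤ) - ((L k i : ℕ) : ℤ)| else 0

theorem exists_flip (P : ℕ → Prop) (a d : ℕ) (h0 : P a) (h1 : ¬ P (a + d)) :
    ∃ t, a ≤ t ∧ t < a + d ∧ P t ∧ ¬ P (t + 1) := by
  induction d with
  | zero => exact absurd h0 h1
  | succ d ih =>
    by_cases h : P (a + d)
    · exact ⟨a + d, by omega, by omega, h, h1⟩
    · obtain ⟨t, h2, h3, h4⟩ := ih h
      exact ⟨t, h2, by omega, h4⟩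

theorem exists_cross {m n : ℕ} (L : Fin n → Equiv.Perm (Fin m)) (i j : Fin m)
    (k k' : Fin n) (hk : k < k') (h0 : L k i < L k j) (h1 : L k' j < L k' i) :
    ∃ t : Fin n, k ≤ t ∧ t < k' ∧ CrossAt L i j t ∧ CrossAt L j i t := by
  have hij : i ≠ j := by rintro rfl; exact lt_irrefl _ h0
  have hk2 : (k : ℕ) < k' := hk
  obtain ⟨t, h2, h3, h4, h5⟩ := exists_flip
    (fun t => ∃ h : t < n, L ⟨t, h⟩ i < L ⟨t, h⟩ j) k (k' - k) ⟨k.2, h0⟩ (by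
      rw [Nat.add_sub_cancel' hk2.le]
      rintro ⟨_, h⟩
      exact lt_asymm h h1)
  obtain ⟨ht, h4⟩ := h4
  have ht1 : t + 1 < n := by omega
  have h6 : L ⟨t + 1, ht1⟩ j < L ⟨t + 1, ht1⟩ i := by
    rcases lt_trichotomy (L ⟨t + 1, ht1⟩ j) (L ⟨t + 1, ht1⟩ i) with h | h | h
    · exact h
    · exact absurd ((L _).injective h).symm hij
    · exact absurd ⟨ht1, h⟩ h5
  refine ⟨⟨t, ht⟩, h2, ?_, ⟨ht1, Or.inl ⟨h4, h6⟩⟩, ⟨ht1, Or.inr ⟨h4, h6⟩⟩⟩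
  show t < (k' : ℕ)
  omega

theorem altCount_le {m n : ℕ} (hn : 0 < n) (b : Fin m → Fin n → ℕ) (L : Fin n → Equiv.Perm (Fin m))
    (hL : Compatible b L) (i j : Fin m) : altCount b i j ≤ crossCount L i j := by
  have key : ∀ p : Fin n × Fin n, AltPair b i j p →
      ∃ t : Fin n, p.1 ≤ t ∧ t < p.2 ∧ CrossAt L i j t := by
    rintro ⟨k, k'⟩ ⟨hk, -, ⟨h0, h1⟩ | ⟨h0, h1⟩⟩
    · obtain ⟨t, h2, h3, h4, -⟩ := exists_cross L i j k k' hk (hL _ _ _ h0) (hL _ _ _ h1)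
      exact ⟨t, h2, h3, h4⟩
    · obtain ⟨t, h2, h3, -, h4⟩ := exists_cross L j i k k' hk (hL _ _ _ h0) (hL _ _ _ h1)
      exact ⟨t, h2, h3, h4⟩
  haveI : Nonempty (Fin n) := ⟨⟨0, hn⟩⟩
  choose! f hf1 hf2 hf3 using key
  have ne1 : ∀ p, AltPair b i j p → b i p.1 ≠ b j p.1 ∧ b i p.2 ≠ b j p.2 := by
    rintro p ⟨-, -, h | h⟩ <;> constructor <;> omega
  unfold altCount crossCount
  refine Finset.card_le_card_of_injOn f ?_ ?_
  · intro p hp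
    simp only [coe_filter, mem_univ, true_and, Set.mem_ofPred_eq] at hp ⊢
    exact hf3 p hp
  · have aux : ∀ p q, AltPair b i j p → AltPair b i j q → f p = f q →
        q.1 ≤ p.1 ∧ p.2 ≤ q.2 := by
      intro p q hp hq h
      have a1 := hf1 p hp
      have a2 := hf2 p hp
      have a3 := hf1 q hq
      have a4 := hf2 q hq
      rw [← h] at a3 a4
      constructor
      · by_contra hc
        exact (ne1 q hq).1 (hp.2.1 q.1 (not_le.mp hc) (a3.trans_lt a2))
      · by_contra hc
        exact (ne1 q hq).2 (hp.2.1 q.2 (a1.trans_lt a4) (not_le.mp hc))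
    intro p hp q hq h
    simp only [coe_filter, mem_univ, true_and, Set.mem_ofPred_eq] at hp hq
    have h1 := aux p q hp hq h
    have h2 := aux q p hq hp h.symm
    exact Prod.ext (le_antisymm h2.1 h1.1) (le_antisymm h1.2 h2.2)

theorem totalCross_ge_sum_alt {m n : ℕ} (hm : 0 < m) (hn : 0 < n)
    (b : Fin m → Fin n → ℕ) (L : Fin n → Equiv.Perm (Fin m))
    (hL : Compatible b L) :
    ∑ p ∈ univ.filter (fun p : Fin m × Fin m => p.1 < p.2), altCount b p.1 p.2 ≤
      totalCross L := by
  unfold totalCross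
  exact Finset.sum_le_sum fun p _ => altCount_le hn b L hL p.1 p.2
end

section
/- Let b be a bin assignment and let i ≠ j be two curves with identical bin vectors, i.e., b(i,k) = b(j,k) for every element k. Then there exists a layout Λ compatible with b that achieves the minimum total crossing number over all compatible layouts and additionally satisfies λ_k(j) = λ_k(i) + 1 for every element k (the duplicate curve j can be kept directly adjacent to its representative i throughout). -/
open Finset

lemma rankPerm {m : ℕ} (f : Fin m → ℕ) (hf : Function.Injective f) :
    ∃ σ : Equiv.Perm (Fin m), (∀ c d, σ c < σ d ↔ f c < f d) ∧
      ∀ c, (σ c : ℕ) = (univ.filter (fun d => f d < f c)).card := by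
  have hlt : ∀ c, (univ.filter (fun d => f d < f c)).card < m := by
    intro c
    have : (univ.filter (fun d => f d < f c)).card < (univ : Finset (Fin m)).card := by
      apply Finset.card_lt_card
      rw [Finset.filter_ssubset]
      exact ⟨c, mem_univ _, lt_irrefl _⟩
    simpa using this
  let g : Fin m → Fin m := fun c => ⟨_, hlt c⟩
  have hmono : ∀ c d, f c < f d → g c < g d := by
    intro c d h
    change (univ.filter (fun e => f e < f c)).card < (univ.filter (fun e => f e < f d)).card
    apply Finset.card_lt_card
    rw [Finset.ssubset_iff_of_subset]
    · exact ⟨c, by simp [h], by simp⟩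
    · intro e he
      simp only [mem_filter, mem_univ, true_and] at he ⊢
      omega
  have hiff : ∀ c d, g c < g d ↔ f c < f d := by
    intro c d
    refine ⟨fun h => ?_, hmono c d⟩
    by_contra hn
    rcases (not_lt.mp hn).lt_or_eq with h1 | h1
    · exact absurd (hmono _ _ h1) (not_lt.mpr h.le)
    · rw [hf h1] at h
      exact lt_irrefl _ h
  have hinj : Function.Injective g := by
    intro c d h
    by_contra hcd
    rcases lt_or_gt_of_ne (fun h' => hcd (hf h')) with h1 | h1
    · exact absurd h (hmono _ _ h1).ne
    · exact absurd h (hmono _ _ h1).ne'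
  refine ⟨Equiv.ofBijective g (Finite.injective_iff_bijective.mp hinj), ?_, ?_⟩
  · intro c d
    simpa using hiff c d
  · intro c
    simp [g]

lemma crossCount_symm {m n : ℕ} (L : Fin n → Equiv.Perm (Fin m)) (c d : Fin m) :
    crossCount L c d = crossCount L d c := by
  unfold crossCount
  congr 1
  ext k
  simp only [mem_filter, mem_univ, true_and, CrossAt]
  constructor <;> rintro ⟨h, h1 | h1⟩ <;> exact ⟨h, by tauto⟩

lemma crossCount_self {m n : ℕ} (L : Fin n → Equiv.Perm (Fin m)) (c : Fin m) :
    crossCount L c c = 0 := by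
  simp [crossCount, CrossAt]

lemma two_totalCross {m n : ℕ} (L : Fin n → Equiv.Perm (Fin m)) :
    2 * totalCross L = ∑ c, ∑ d, crossCount L c d := by
  rw [← Fintype.sum_prod_type' (f := fun c d => crossCount L c d)]
  have h1 := Finset.sum_filter_add_sum_filter_not univ (fun p : Fin m × Fin m => p.1 < p.2)
    (fun p => crossCount L p.1 p.2)
  have h2 : ∑ p ∈ univ.filter (fun p : Fin m × Fin m => ¬ p.1 < p.2), crossCount L p.1 p.2
      = ∑ p ∈ univ.filter (fun p : Fin m × Fin m => p.2 < p.1), crossCount L p.1 p.2 := by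
    symm
    apply Finset.sum_subset
    · intro p hp
      simp only [mem_filter, mem_univ, true_and] at hp ⊢
      exact not_lt.mpr hp.le
    · intro p hp hq
      simp only [mem_filter, mem_univ, true_and] at hp hq
      have : p.1 = p.2 := le_antisymm (not_lt.mp hq) (not_lt.mp hp)
      rw [this, crossCount_self]
  have h3 : ∑ p ∈ univ.filter (fun p : Fin m × Fin m => p.2 < p.1), crossCount L p.1 p.2
      = totalCross L := by
    unfold totalCross
    apply Finset.sum_nbij' Prod.swap Prod.swap
    · simp
    · simp
    · simp
    · simp
    · intro p _
      exact crossCount_symm L _ _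
  have h4 : totalCross L = ∑ p ∈ univ.filter (fun p : Fin m × Fin m => p.1 < p.2),
    crossCount L p.1 p.2 := rfl
  omega

lemma sum_split {m : ℕ} (i j : Fin m) (hij : i ≠ j) (F : Fin m → ℕ) :
    ∑ c, F c = F i + F j + ∑ c ∈ (univ.erase i).erase j, F c := by
  rw [← Finset.add_sum_erase univ F (mem_univ i),
    ← Finset.add_sum_erase (univ.erase i) F (a := j) (by simp [hij.symm])]
  ring

lemma sum_le {m : ℕ} (X : Fin m → Fin m → ℕ) (hs : ∀ c d, X c d = X d c) (h0 : ∀ c, X c c = 0)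
    (i j r s : Fin m) (hij : i ≠ j) (hrs : r = i ∧ s = j ∨ r = j ∧ s = i)
    (hle : ∑ c, X r c ≤ ∑ c, X s c) (g : Fin m → Fin m)
    (hg : g = fun c => if c = i ∨ c = j then r else c) :
    ∑ c, ∑ d, X (g c) (g d) ≤ ∑ c, ∑ d, X c d := by
  have gi : g i = r := by simp [hg]
  have gj : g j = r := by simp [hg]
  have gU : ∀ c ∈ (univ.erase i).erase j, g c = c := by
    intro c hc
    simp only [mem_erase, mem_univ, and_true] at hc
    simp [hg, hc.1, hc.2]
  simp only [sum_split i j hij, gi, gj, h0, sum_add_distrib] at hle ⊢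
  have e1 : ∑ c ∈ (univ.erase i).erase j, X r (g c) = ∑ c ∈ (univ.erase i).erase j, X r c :=
    sum_congr rfl fun c hc => by rw [gU c hc]
  have e2 : ∑ c ∈ (univ.erase i).erase j, X (g c) r = ∑ c ∈ (univ.erase i).erase j, X r c :=
    sum_congr rfl fun c hc => by rw [gU c hc, hs]
  have e3 : ∑ c ∈ (univ.erase i).erase j, ∑ d ∈ (univ.erase i).erase j, X (g c) (g d)
      = ∑ c ∈ (univ.erase i).erase j, ∑ d ∈ (univ.erase i).erase j, X c d :=
    sum_congr rfl fun c hc => sum_congr rfl fun d hd => by rw [gU c hc, gU d hd]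
  have e4 : ∀ t, ∑ c ∈ (univ.erase i).erase j, X c t = ∑ c ∈ (univ.erase i).erase j, X t c :=
    fun t => sum_congr rfl fun c hc => hs _ _
  rw [e1, e2, e3, e4 i, e4 j]
  have := hs i j
  rcases hrs with ⟨rfl, rfl⟩ | ⟨rfl, rfl⟩ <;> simp only [h0] at hle <;> omega

lemma merge {m n : ℕ} (b : Fin m → Fin n → ℕ) (i j r s : Fin m) (hij : i ≠ j)
    (hdup : ∀ k : Fin n, b i k = b j k) (hrs : r = i ∧ s = j ∨ r = j ∧ s = i)
    (L : Fin n → Equiv.Perm (Fin m)) (hL : Compatible b L)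
    (hle : ∑ c, crossCount L r c ≤ ∑ c, crossCount L s c) :
    ∃ L' : Fin n → Equiv.Perm (Fin m), Compatible b L' ∧ totalCross L' ≤ totalCross L ∧
      ∀ k : Fin n, ((L' k j : ℕ) = (L' k i : ℕ) + 1) := by
  obtain ⟨g, hg⟩ : ∃ g : Fin m → Fin m, g = fun c => if c = i ∨ c = j then r else c := ⟨_, rfl⟩
  have hr : r = i ∨ r = j := by tauto
  have gi : g i = r := by simp [hg]
  have gj : g j = r := by simp [hg]
  have gU : ∀ c, c ≠ i → c ≠ j → g c = c := by
    intro c h1 h2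
    simp [hg, h1, h2]
  have gb : ∀ c k, b (g c) k = b c k := by
    intro c k
    have := hdup k
    grind
  have gne : ∀ c d, g c = g d → c = d ∨ (c = i ∧ d = j) ∨ (c = j ∧ d = i) := by
    intro c d h
    grind
  obtain ⟨f, hf⟩ : ∃ f : Fin n → Fin m → ℕ,
      f = fun k c => 2 * (L k (g c) : ℕ) + if c = j then 1 else 0 := ⟨_, rfl⟩
  have fval : ∀ k c, f k c = 2 * (L k (g c) : ℕ) + if c = j then 1 else 0 := by simp [hf]
  have flt : ∀ k c d, L k (g c) < L k (g d) → f k c < f k d := by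
    intro k c d h
    have h' : (L k (g c) : ℕ) < L k (g d) := h
    rw [fval, fval]
    split_ifs <;> omega
  have finj : ∀ k, Function.Injective (f k) := by
    intro k c d h
    rw [fval, fval] at h
    have h1 : (L k (g c) : ℕ) = L k (g d) := by split_ifs at h <;> omega
    have h2 := (L k).injective (Fin.ext h1)
    rcases gne c d h2 with h3 | ⟨h3, h4⟩ | ⟨h3, h4⟩
    · exact h3
    · simp [h3, h4, gi, gj, hij] at h
    · simp [h3, h4, gi, gj, hij] at h
  have flt2 : ∀ k c d, g c ≠ g d → (f k c < f k d ↔ L k (g c) < L k (g d)) := by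
    intro k c d h
    refine ⟨fun h1 => ?_, flt k c d⟩
    by_contra h2
    rcases (not_lt.mp h2).lt_or_eq with h3 | h3
    · have := flt k _ _ h3
      omega
    · exact h ((L k).injective h3).symm
  have fij : ∀ k, f k j = f k i + 1 := by
    intro k
    rw [fval, fval, gi, gj]
    simp [hij]
  choose L' h1 h2 using fun k => rankPerm (f k) (finj k)
  refine ⟨L', ?_, ?_, ?_⟩
  · intro c d k h
    rw [h1]
    apply flt
    apply hL
    rwa [gb, gb]
  · have hc : ∀ c d, crossCount L' c d = crossCount L (g c) (g d) := by
      intro c d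
      unfold crossCount
      congr 1
      ext k
      simp only [mem_filter, mem_univ, true_and, CrossAt, h1]
      by_cases h : g c = g d
      · rw [h]
        simp only [lt_irrefl, false_and, or_self, exists_false, iff_false]
        rintro ⟨hk, h5⟩
        have q1 := fij k
        have q2 := fij ⟨(k : ℕ) + 1, hk⟩
        rcases gne c d h with rfl | ⟨rfl, rfl⟩ | ⟨rfl, rfl⟩ <;> omega
      · simp only [flt2 _ _ _ h, flt2 _ _ _ (Ne.symm h)]
    have h3 := two_totalCross L'
    have h4 := two_totalCross L
    simp only [hc] at h3
    have := sum_le (crossCount L) (crossCount_symm L) (crossCount_self L) i j r s hij hrs hle g hg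
    omega
  · intro k
    rw [h2, h2]
    have : univ.filter (fun d => f k d < f k j) = insert i (univ.filter (fun d => f k d < f k i)) := by
      ext d
      simp only [mem_filter, mem_univ, true_and, mem_insert, fij k]
      constructor
      · intro h
        by_cases hd : f k d = f k i
        · exact Or.inl (finj k hd)
        · right
          omega
      · rintro (rfl | h) <;> omega
    rw [this, card_insert_of_notMem (by simp)]

lemma exists_compatible {m n : ℕ} (b : Fin m → Fin n → ℕ) :
    ∃ L : Fin n → Equiv.Perm (Fin m), Compatible b L := by
  have key : ∀ k (c d : Fin m), b c k < b d k → b c k * m + c < b d k * m + d := by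
    intro k c d h
    have := c.2
    have h2 : (b c k + 1) * m ≤ b d k * m := Nat.mul_le_mul_right _ h
    rw [add_mul] at h2
    omega
  have inj : ∀ k, Function.Injective (fun c : Fin m => b c k * m + (c : ℕ)) := by
    intro k c d h
    simp only at h
    rcases lt_trichotomy (b c k) (b d k) with h1 | h1 | h1
    · have := key k _ _ h1
      omega
    · rw [h1] at h
      exact Fin.ext (by omega)
    · have := key k _ _ h1
      omega
  choose L h1 _ using fun k => rankPerm _ (inj k)
  exact ⟨L, fun c d k h => (h1 k c d).mpr (key k c d h)⟩

theorem optimal_layout_with_adjacent_duplicate {m n : ℕ} (hm : 0 < m) (hn : 0 < n)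
    (b : Fin m → Fin n → ℕ) (i j : Fin m) (hij : i ≠ j)
    (hdup : ∀ k : Fin n, b i k = b j k) :
    ∃ L : Fin n → Equiv.Perm (Fin m), Compatible b L ∧
      (∀ L' : Fin n → Equiv.Perm (Fin m), Compatible b L' → totalCross L ≤ totalCross L') ∧
      ∀ k : Fin n, ((L k j : ℕ) = (L k i : ℕ) + 1) := by
  obtain ⟨L, hL, hmin⟩ := Set.exists_min_image
    {L : Fin n → Equiv.Perm (Fin m) | Compatible b L} totalCross (Set.toFinite _)
    (exists_compatible b)
  have : ∃ L' : Fin n → Equiv.Perm (Fin m), Compatible b L' ∧ totalCross L' ≤ totalCross L ∧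
      ∀ k : Fin n, ((L' k j : ℕ) = (L' k i : ℕ) + 1) := by
    rcases le_total (∑ c, crossCount L i c) (∑ c, crossCount L j c) with h | h
    · exact merge b i j i j hij hdup (Or.inl ⟨rfl, rfl⟩) L hL h
    · exact merge b i j j i hij hdup (Or.inr ⟨rfl, rfl⟩) L hL h
  obtain ⟨L', h1, h2, h3⟩ := this
  exact ⟨L', h1, fun L'' h => h2.trans (hmin L'' h), h3⟩
end

section
/- For every bin assignment b there exists a layout Λ compatible with b achieving the minimum total crossing number over all compatible layouts such that, for every element k with 1 ≤ k < n, the number of unordered pairs of curves that cross between elements k and k+1 is at most the number of ordered pairs (x,y) of distinct curves with b(x,k) ≤ b(y,k) and b(x,k+1) > b(y,k+1). (This justifies the upper-bound weight w used in the TSP-based element ordering.) -/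
open Finset

theorem aux_perm {m : ℕ} {α : Type*} [LinearOrder α] (f : Fin m → α) (hf : Function.Injective f) :
    ∃ σ : Equiv.Perm (Fin m), ∀ i j, σ i < σ j ↔ f i < f j := by
  refine ⟨(Tuple.sort f).symm, fun i j => ?_⟩
  have h : StrictMono (f ∘ Tuple.sort f) :=
    (Tuple.monotone_sort f).strictMono_of_injective (hf.comp (Tuple.sort f).injective)
  have := h.lt_iff_lt (a := (Tuple.sort f).symm i) (b := (Tuple.sort f).symm j)
  simpa using this.symm

theorem aux_base {m : ℕ} (c : Fin m → ℕ → ℕ) :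
    ∃ σ : Equiv.Perm (Fin m), ∀ i j k, (∀ t < k, c i t = c j t) → c i k < c j k → σ i < σ j := by
  obtain ⟨σ, h⟩ := aux_perm (fun i : Fin m => toLex ((toLex (c i) : Lex (ℕ → ℕ)), i))
    (fun i j hij => by simpa using congrArg (fun x => (ofLex x).2) hij)
  refine ⟨σ, fun i j k h1 h2 => (h i j).2 ?_⟩
  rw [Prod.Lex.toLex_lt_toLex]
  left
  exact ⟨k, h1, h2⟩

theorem aux_step {m : ℕ} (c : Fin m → ℕ) (τ : Equiv.Perm (Fin m)) :
    ∃ σ : Equiv.Perm (Fin m), ∀ i j, σ i < σ j ↔ (c i < c j ∨ c i = c j ∧ τ i < τ j) := by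
  obtain ⟨σ, h⟩ := aux_perm (fun i : Fin m => toLex (c i, τ i))
    (fun i j hij => by simpa using congrArg (fun x => (ofLex x).2) hij)
  refine ⟨σ, fun i j => ?_⟩
  rw [h, Prod.Lex.toLex_lt_toLex]

theorem aux_seq {m : ℕ} (c : Fin m → ℕ → ℕ) :
    ∃ Λ : ℕ → Equiv.Perm (Fin m),
      (∀ i j k, (∀ t < k, c i t = c j t) → c i k < c j k → Λ 0 i < Λ 0 j) ∧
      (∀ k i j, Λ (k+1) i < Λ (k+1) j ↔
        (c i (k+1) < c j (k+1) ∨ c i (k+1) = c j (k+1) ∧ Λ k i < Λ k j)) := by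
  obtain ⟨σ, h⟩ := aux_base c
  choose g hg using fun (k : ℕ) (τ : Equiv.Perm (Fin m)) => aux_step (fun i => c i k) τ
  exact ⟨fun k => Nat.rec σ (fun k τ => g (k+1) τ) k, h, fun k i j => hg (k+1) _ i j⟩

theorem aux_ivt (P : ℕ → Prop) (t k : ℕ) (htk : t ≤ k) (h1 : P t) (h2 : ¬ P (k+1)) :
    ∃ s, t ≤ s ∧ s ≤ k ∧ P s ∧ ¬ P (s+1) := by
  by_contra! hc
  have : ∀ u, t ≤ u → u ≤ k + 1 → P u := by
    intro u hu
    induction u, hu using Nat.le_induction with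
    | base => exact fun _ => h1
    | succ u hu ih => exact fun h => hc u hu (by omega) (ih (by omega))
  exact h2 (this _ (by omega) le_rfl)

theorem aux_back {m : ℕ} (c : Fin m → ℕ → ℕ) (Λ : ℕ → Equiv.Perm (Fin m))
    (hs : ∀ k i j, Λ (k+1) i < Λ (k+1) j ↔
        (c i (k+1) < c j (k+1) ∨ c i (k+1) = c j (k+1) ∧ Λ k i < Λ k j))
    (h0 : ∀ i j k, (∀ t < k, c i t = c j t) → c i k < c j k → Λ 0 i < Λ 0 j) (i j : Fin m) (k : ℕ)
    (h : Λ k i < Λ k j) :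
    (∃ t ≤ k, c i t < c j t ∧ ∀ u, t < u → u ≤ k → c i u = c j u) ∨
      ((∀ u ≤ k, c i u = c j u) ∧ Λ 0 i < Λ 0 j) := by
  induction k with
  | zero =>
    rcases lt_trichotomy (c i 0) (c j 0) with h1 | h1 | h1
    · exact Or.inl ⟨0, le_rfl, h1, fun u _ _ => by omega⟩
    · exact Or.inr ⟨fun u hu => by obtain rfl : u = 0 := by omega
                                   exact h1, h⟩
    · exact absurd (h0 j i 0 (by simp) h1) (by simpa using h.le)
  | succ k ih =>
    rcases (hs k i j).1 h with h1 | ⟨h1, h2⟩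
    · exact Or.inl ⟨k+1, le_rfl, h1, fun u _ _ => by omega⟩
    · have key : ∀ u, u ≤ k + 1 → u ≤ k ∨ u = k + 1 := fun u hu => by omega
      rcases ih h2 with ⟨t, ht, h3, h4⟩ | ⟨h3, h4⟩
      · refine Or.inl ⟨t, by omega, h3, fun u hu hu' => ?_⟩
        rcases key u hu' with h5 | rfl
        · exact h4 u hu h5
        · exact h1
      · refine Or.inr ⟨fun u hu' => ?_, h4⟩
        rcases key u hu' with h5 | rfl
        · exact h3 u h5
        · exact h1

theorem CrossAt.symm' {m n : ℕ} {L : Fin n → Equiv.Perm (Fin m)} {i j : Fin m} {k : Fin n}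
    (h : CrossAt L i j k) : CrossAt L j i k := by
  obtain ⟨h, h'⟩ := h
  exact ⟨h, h'.symm⟩

theorem aux_cross {m n : ℕ} (c : Fin m → ℕ → ℕ) (Λ : ℕ → Equiv.Perm (Fin m))
    (hs : ∀ k i j, Λ (k+1) i < Λ (k+1) j ↔
        (c i (k+1) < c j (k+1) ∨ c i (k+1) = c j (k+1) ∧ Λ k i < Λ k j))
    (h0 : ∀ i j k, (∀ t < k, c i t = c j t) → c i k < c j k → Λ 0 i < Λ 0 j)
    (L' : Fin n → Equiv.Perm (Fin m))
    (hL' : ∀ i j (k : Fin n), c i k < c j k → L' k i < L' k j)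
    (i j : Fin m) (k : ℕ) (hk : k + 1 < n)
    (h : Λ k i < Λ k j) (h' : Λ (k+1) j < Λ (k+1) i) :
    ∃ s : Fin n, (s : ℕ) ≤ k ∧ CrossAt L' i j s ∧ (∀ u, (s : ℕ) < u → u ≤ k → c i u = c j u) ∧
      c i (k+1) ≠ c j (k+1) := by
  have h1 : c j (k+1) < c i (k+1) := by
    rcases (hs k j i).1 h' with h1 | ⟨_, h2⟩
    · exact h1
    · exact absurd h2 (by simpa using h.le)
  rcases aux_back c Λ hs h0 i j k h with ⟨t, ht, h3, h4⟩ | ⟨h3, h4⟩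
  · have hij : i ≠ j := by rintro rfl; exact lt_irrefl _ h
    obtain ⟨s, hs1, hs2, hs3, hs4⟩ :=
      aux_ivt (fun u => ∀ hu : u < n, L' ⟨u, hu⟩ i < L' ⟨u, hu⟩ j) t k ht
      (fun hu => hL' i j ⟨t, hu⟩ h3)
      (fun hu => absurd (hu hk) (by simpa using (hL' j i ⟨k+1, hk⟩ h1).le))
    have hsn : s + 1 < n := lt_of_le_of_lt (Nat.succ_le_succ hs2) hk
    refine ⟨⟨s, (Nat.lt_succ_self s).trans hsn⟩, hs2, ⟨hsn, Or.inl ⟨hs3 _, ?_⟩⟩, fun u hu => h4 u (lt_of_le_of_lt hs1 hu),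
      h1.ne'⟩
    push Not at hs4
    obtain ⟨_, hs4⟩ := hs4
    exact lt_of_le_of_ne hs4 (fun e => hij ((Equiv.injective _ e).symm))
  · exact absurd (h0 j i (k+1) (fun t ht => (h3 t (by omega)).symm) h1) (by simpa using h4.le)

theorem optimal_layout_gapwise_upper_bound {m n : ℕ} (hm : 0 < m) (hn : 0 < n)
    (b : Fin m → Fin n → ℕ) :
    ∃ L : Fin n → Equiv.Perm (Fin m), Compatible b L ∧
      (∀ L' : Fin n → Equiv.Perm (Fin m), Compatible b L' → totalCross L ≤ totalCross L') ∧
      ∀ (k : Fin n) (hk : (k : ℕ) + 1 < n),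
        (univ.filter (fun p : Fin m × Fin m => p.1 < p.2 ∧
            ((L k p.1 < L k p.2 ∧ L ⟨(k : ℕ) + 1, hk⟩ p.2 < L ⟨(k : ℕ) + 1, hk⟩ p.1) ∨
             (L k p.2 < L k p.1 ∧ L ⟨(k : ℕ) + 1, hk⟩ p.1 < L ⟨(k : ℕ) + 1, hk⟩ p.2)))).card ≤
        (univ.filter (fun p : Fin m × Fin m => p.1 ≠ p.2 ∧
            b p.1 k ≤ b p.2 k ∧ b p.2 ⟨(k : ℕ) + 1, hk⟩ < b p.1 ⟨(k : ℕ) + 1, hk⟩)).card := by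
  classical
  let c : Fin m → ℕ → ℕ := fun i k => if h : k < n then b i ⟨k, h⟩ else 0
  have hc : ∀ i (k : Fin n), c i k = b i k := fun i k => by simp [c]
  obtain ⟨Λ, h0, hs⟩ := aux_seq c
  have hg : ∀ k i j, Λ k i < Λ k j → Λ (k+1) j < Λ (k+1) i →
      c i k ≤ c j k ∧ c j (k+1) < c i (k+1) := by
    intro k i j h h'
    constructor
    · by_contra! hlt
      rcases k with _ | k
      · exact absurd (h0 j i 0 (by simp) hlt) (by simpa using h.le)
      · exact absurd ((hs k j i).2 (Or.inl hlt)) (by simpa using h.le)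
    · rcases (hs k j i).1 h' with h1 | ⟨_, h2⟩
      · exact h1
      · exact absurd h2 (by simpa using h.le)
  refine ⟨fun k => Λ k, ?_, ?_, ?_⟩
  · intro i j k hb
    rw [← hc, ← hc] at hb
    obtain ⟨k, hk⟩ := k
    rcases k with _ | k
    · exact h0 i j 0 (by simp) hb
    · exact (hs k i j).2 (Or.inl hb)
  · intro L' hL'
    have hL2 : ∀ i j (k : Fin n), c i k < c j k → L' k i < L' k j := fun i j k h =>
      hL' i j k (by rwa [hc, hc] at h)
    unfold totalCross
    refine Finset.sum_le_sum fun p _ => ?_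
    obtain ⟨i, j⟩ := p
    have key : ∀ k : Fin n, CrossAt (fun k : Fin n => Λ k) i j k → ∃ s : Fin n, (s : ℕ) ≤ k ∧
        CrossAt L' i j s ∧ (∀ u, (s : ℕ) < u → u ≤ k → c i u = c j u) ∧
        c i (k+1) ≠ c j (k+1) := by
      rintro k ⟨hk, ⟨h1, h2⟩ | ⟨h1, h2⟩⟩
      · exact aux_cross c Λ hs h0 L' hL2 i j k hk h1 h2
      · obtain ⟨s, a1, a2, a3, a4⟩ := aux_cross c Λ hs h0 L' hL2 j i k hk h1 h2
        exact ⟨s, a1, a2.symm', fun u hu hu' => (a3 u hu hu').symm, a4.symm⟩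
    choose! f hf1 hf2 hf3 hf4 using key
    unfold crossCount
    refine Finset.card_le_card_of_injOn f (fun k hk => ?_) ?_
    · simp only [coe_filter, mem_univ, true_and, Set.mem_ofPred_eq] at hk ⊢
      exact hf2 k hk
    · have aux : ∀ k k' : Fin n, CrossAt (fun k : Fin n => Λ k) i j k →
          CrossAt (fun k : Fin n => Λ k) i j k' → f k = f k' → ¬ k < k' := by
        intro k k' hk hk' e hlt
        have := hf1 k hk
        have hlt' : (k : ℕ) < k' := hlt
        exact hf4 k hk (hf3 k' hk' (k+1) (by rw [← e]; omega) (by omega))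
      intro k hk k' hk' e
      simp only [coe_filter, mem_univ, true_and, Set.mem_ofPred_eq] at hk hk'
      exact le_antisymm (not_lt.1 (aux k' k hk' hk e.symm)) (not_lt.1 (aux k k' hk hk' e))
  · intro k hk
    refine Finset.card_le_card_of_injOn
      (fun p => if Λ k p.1 < Λ k p.2 then p else p.swap) ?_ ?_
    · rintro ⟨i, j⟩ hp
      simp only [coe_filter, mem_univ, true_and, Set.mem_ofPred_eq] at hp ⊢
      have e : ∀ i, b i ⟨k + 1, hk⟩ = c i (k+1) := fun i => (hc i ⟨k+1, hk⟩).symm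
      obtain ⟨hlt, ⟨h1, h2⟩ | ⟨h1, h2⟩⟩ := hp
      · rw [if_pos h1]
        refine ⟨hlt.ne, ?_⟩
        rw [e, e, ← hc, ← hc]
        exact hg k i j h1 h2
      · rw [if_neg (not_lt.2 h1.le)]
        refine ⟨hlt.ne', ?_⟩
        rw [e, e, ← hc, ← hc]
        exact hg k j i h1 h2
    · rintro ⟨i, j⟩ hp ⟨i', j'⟩ hp' e
      simp only [coe_filter, mem_univ, true_and, Set.mem_ofPred_eq] at hp hp'
      have a := hp.1
      have a' := hp'.1
      dsimp only at e
      split_ifs at e <;> simp only [Prod.swap_prod_mk, Prod.mk.injEq] at e ⊢ <;> grind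
end
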